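/- arXiv:1401.2168 — 2 statements merged into one kernel-verified Lean document; each statement's English description precedes it below -/
import Mathlib

section
/- Let the stochastic kernel P(dx′|x,a) on X given X×A be weakly continuous and the stochastic kernel Q(dy|a,x) on Y given A×X be continuous in total variation. Then the stochastic kernel R′(dy|z,a) on Y given P(X)×A, defined by R′(C|z,a) = ∫_X ∫_X Q(C|a,x′) P(dx′|x,a) z(dx), is continuous in total variation: whenever z⁽ⁿ⁾ → z weakly in P(X) and a⁽ⁿ⁾ → a in A, sup_{C Borel in Y} |R′(C|z⁽ⁿ⁾,a⁽ⁿ⁾) − R′(C|z,a)| → 0. -/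
open MeasureTheory Filter Topology
open scoped ENNReal NNReal

/-- The kernel `R'(C|z,a) = ∫_X ∫_X Q(C|a,x') P(dx'|x,a) z(dx)` of formula (3.5). -/
noncomputable def Rprime {X Y A : Type*} [MeasurableSpace X] [MeasurableSpace Y]
    (P : X × A → ProbabilityMeasure X) (Q : A × X → ProbabilityMeasure Y)
    (z : ProbabilityMeasure X) (a : A) (C : Set Y) : ℝ≥0∞ :=
  ∫⁻ x, (∫⁻ x', ((Q (a, x') : Measure Y) C) ∂((P (x, a) : Measure X))) ∂(z : Measure X)

theorem aux_tendsto_integral {T : Type*} [TopologicalSpace T] [MeasurableSpace T]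
    [OpensMeasurableSpace T] {ms : ℕ → ProbabilityMeasure T} {m : ProbabilityMeasure T}
    (h : Tendsto ms atTop (𝓝 m)) (p : T → ℝ) (hp : Continuous p) (hb : ∀ x, |p x| ≤ 1) :
    Tendsto (fun n => ∫ x, p x ∂(ms n : Measure T)) atTop (𝓝 (∫ x, p x ∂(m : Measure T))) :=
  (ProbabilityMeasure.tendsto_iff_forall_integral_tendsto.1 h)
    (BoundedContinuousFunction.ofNormedAddCommGroup p hp 1 hb)

theorem aux_core {T ι : Type*} [TopologicalSpace T] [SecondCountableTopology T]
    [MeasurableSpace T] [OpensMeasurableSpace T]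
    {ms : ℕ → ProbabilityMeasure T} {m : ProbabilityMeasure T}
    (h : Tendsto ms atTop (𝓝 m)) (f : ι → T → ℝ) (hfm : ∀ i, Measurable (f i))
    (hf0 : ∀ i x, |f i x| ≤ 1) (D : T → T → ℝ) (hD : ∀ i x y, |f i x - f i y| ≤ D x y)
    (hDc : ∀ y, Continuous fun x => D x y) (hDs : ∀ x y, D x y = D y x) (hD0 : ∀ x, D x x = 0)
    (ε : ℝ) (hε : 0 < ε) :
    ∀ᶠ n in atTop, ∀ i, |∫ x, f i x ∂(ms n : Measure T) - ∫ x, f i x ∂(m : Measure T)| ≤ 8 * ε := by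
  have : Nonempty T := (inferInstance : NeZero (m : Measure T)).out |> fun hne => by
    by_contra hT
    rw [not_nonempty_iff] at hT
    exact hne (Measure.eq_zero_of_isEmpty _)
  let s : ℕ → T := TopologicalSpace.denseSeq T
  let ψ : ℕ → T → ℝ := fun j x => min 1 (max 0 (2 - D x (s j) / ε))
  have hψc : ∀ j, Continuous (ψ j) := fun j =>
    continuous_const.min (continuous_const.max (continuous_const.sub ((hDc (s j)).div_const ε)))
  have hψ0 : ∀ j x, 0 ≤ ψ j x := fun j x => le_min zero_le_one (le_max_left _ _)
  have hψ1 : ∀ j x, ψ j x ≤ 1 := fun j x => min_le_left _ _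
  have hψD : ∀ j x, ψ j x ≠ 0 → D x (s j) ≤ 2 * ε := by
    intro j x hx
    by_contra hlt
    push Not at hlt
    apply hx
    have : 2 ≤ D x (s j) / ε := by rw [le_div_iff₀ hε]; exact hlt.le
    simp only [ψ]
    rw [max_eq_left (by linarith), min_eq_right zero_le_one]
  have hψone : ∀ j x, D x (s j) ≤ ε → ψ j x = 1 := by
    intro j x hx
    have : D x (s j) / ε ≤ 1 := by rw [div_le_one hε]; exact hx
    simp only [ψ]
    exact min_eq_left (le_max_of_le_right (by linarith))
  let q : ℕ → T → ℝ := fun k x => ∏ j ∈ Finset.range k, (1 - ψ j x)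
  have hqc : ∀ k, Continuous (q k) := fun k =>
    continuous_finsetProd _ fun j _ => continuous_const.sub (hψc j)
  have hq0 : ∀ k x, 0 ≤ q k x := fun k x =>
    Finset.prod_nonneg fun j _ => sub_nonneg.2 (hψ1 j x)
  have hq1 : ∀ k x, q k x ≤ 1 := fun k x =>
    Finset.prod_le_one (fun j _ => sub_nonneg.2 (hψ1 j x)) fun j _ => by linarith [hψ0 j x]
  let p : ℕ → T → ℝ := fun j x => ψ j x * q j x
  have hpc : ∀ k, Continuous (p k) := fun k => (hψc k).mul (hqc k)
  have hp0 : ∀ k x, 0 ≤ p k x := fun k x => mul_nonneg (hψ0 k x) (hq0 k x)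
  have hp1 : ∀ k x, p k x ≤ 1 := fun k x => mul_le_one₀ (hψ1 k x) (hq0 k x) (hq1 k x)
  have hsum : ∀ k x, ∑ j ∈ Finset.range k, p j x = 1 - q k x := by
    intro k x
    induction k with
    | zero => simp [q]
    | succ k ih =>
      rw [Finset.sum_range_succ, ih]
      simp only [p, q, Finset.prod_range_succ]
      ring
  have hqabs : ∀ k x, |q k x| ≤ 1 := fun k x => abs_le.2 ⟨by linarith [hq0 k x], hq1 k x⟩
  have hpabs : ∀ k x, |p k x| ≤ 1 := fun k x => abs_le.2 ⟨by linarith [hp0 k x], hp1 k x⟩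
  -- pointwise approximation
  have happ : ∀ i k x, |f i x - ∑ j ∈ Finset.range k, f i (s j) * p j x| ≤ 2 * ε + q k x := by
    intro i k x
    have e : f i x - ∑ j ∈ Finset.range k, f i (s j) * p j x
        = ∑ j ∈ Finset.range k, (f i x - f i (s j)) * p j x + f i x * q k x := by
      simp only [sub_mul, Finset.sum_sub_distrib, ← Finset.mul_sum, hsum]
      ring
    rw [e]
    have h1 : |∑ j ∈ Finset.range k, (f i x - f i (s j)) * p j x|
        ≤ ∑ j ∈ Finset.range k, 2 * ε * p j x := by
      refine (Finset.abs_sum_le_sum_abs _ _).trans (Finset.sum_le_sum fun j _ => ?_)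
      rw [abs_mul, abs_of_nonneg (hp0 j x)]
      by_cases hz : ψ j x = 0
      · simp [p, hz]
      · exact mul_le_mul_of_nonneg_right ((hD i x (s j)).trans (hψD j x hz)) (hp0 j x)
    rw [← Finset.mul_sum, hsum] at h1
    have h2 : |f i x * q k x| ≤ q k x := by
      rw [abs_mul, abs_of_nonneg (hq0 k x)]
      exact mul_le_of_le_one_left (hq0 k x) (hf0 i x)
    have h3 := abs_add_le (∑ j ∈ Finset.range k, (f i x - f i (s j)) * p j x) (f i x * q k x)
    nlinarith [hq0 k x]
  -- tails
  have hqlim : Tendsto (fun k => ∫ x, q k x ∂(m : Measure T)) atTop (𝓝 0) := by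
    have : Tendsto (fun k => ∫ x, q k x ∂(m : Measure T)) atTop
        (𝓝 (∫ x, (0 : ℝ) ∂(m : Measure T))) := by
      refine tendsto_integral_of_dominated_convergence (fun _ => (1 : ℝ))
        (fun k => (hqc k).measurable.aestronglyMeasurable) (integrable_const _)
        (fun k => Eventually.of_forall fun x => hqabs k x) (Eventually.of_forall fun x => ?_)
      have hopen : IsOpen {y | D y x < ε} := isOpen_lt (hDc x) continuous_const
      obtain ⟨y, hy, j, rfl⟩ := (TopologicalSpace.denseRange_denseSeq T).inter_open_nonempty _ hopen
        ⟨x, by simpa [hD0] using hε⟩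
      refine tendsto_const_nhds.congr' ?_
      filter_upwards [eventually_gt_atTop j] with k hk
      refine (Finset.prod_eq_zero (Finset.mem_range.2 hk) ?_).symm
      rw [hψone j x (by rw [hDs]; exact le_of_lt hy), sub_self]
    simpa using this
  obtain ⟨k, hk⟩ := (hqlim.eventually (gt_mem_nhds hε)).exists
  have e1 : ∀ᶠ n in atTop, ∫ x, q k x ∂(ms n : Measure T) < ε :=
    (aux_tendsto_integral h (q k) (hqc k) (hqabs k)).eventually (gt_mem_nhds hk)
  have e2 : ∀ᶠ n in atTop, ∑ j ∈ Finset.range k,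
      |∫ x, p j x ∂(ms n : Measure T) - ∫ x, p j x ∂(m : Measure T)| < ε := by
    have : Tendsto (fun n => ∑ j ∈ Finset.range k,
      |∫ x, p j x ∂(ms n : Measure T) - ∫ x, p j x ∂(m : Measure T)|) atTop (𝓝 0) := by
      have := tendsto_finsetSum (Finset.range k) fun j _ =>
        ((aux_tendsto_integral h (p j) (hpc j) (hpabs j)).sub_const
          (∫ x, p j x ∂(m : Measure T))).abs
      simpa using this
    exact this.eventually (gt_mem_nhds hε)
  have hint : ∀ (μ : ProbabilityMeasure T) (g : T → ℝ), Measurable g → (∀ x, |g x| ≤ 1) →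
      Integrable g (μ : Measure T) := fun μ g hg hb =>
    Integrable.of_bound hg.aestronglyMeasurable 1 (Eventually.of_forall hb)
  have key : ∀ (μ : ProbabilityMeasure T) i, |∫ x, f i x ∂(μ : Measure T)
      - ∑ j ∈ Finset.range k, f i (s j) * ∫ x, p j x ∂(μ : Measure T)|
      ≤ 2 * ε + ∫ x, q k x ∂(μ : Measure T) := by
    intro μ i
    have hpi : ∀ j, Integrable (p j) (μ : Measure T) := fun j =>
      hint μ _ (hpc j).measurable (hpabs j)
    have hqi := hint μ _ (hqc k).measurable (hqabs k)
    have hfi := hint μ _ (hfm i) (hf0 i)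
    have hsi : Integrable (fun x => ∑ j ∈ Finset.range k, f i (s j) * p j x) (μ : Measure T) :=
      integrable_finsetSum _ fun j _ => (hpi j).const_mul _
    have e : ∑ j ∈ Finset.range k, f i (s j) * ∫ x, p j x ∂(μ : Measure T)
        = ∫ x, ∑ j ∈ Finset.range k, f i (s j) * p j x ∂(μ : Measure T) := by
      rw [integral_finsetSum _ fun j _ => (hpi j).const_mul _]
      simp only [integral_const_mul]
    rw [e, ← integral_sub hfi hsi]
    refine abs_integral_le_integral_abs.trans ?_
    refine (integral_mono (hfi.sub hsi).abs ((integrable_const (2 * ε)).add hqi)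
      (fun x => happ i k x)).trans ?_
    simp only [Pi.add_apply]
    rw [integral_add (integrable_const _) hqi]
    simp
  filter_upwards [e1, e2] with n h1 h2 i
  have k1 := key (ms n) i
  have k2 := key m i
  have k3 : |∑ j ∈ Finset.range k, f i (s j) * ∫ x, p j x ∂(ms n : Measure T)
      - ∑ j ∈ Finset.range k, f i (s j) * ∫ x, p j x ∂(m : Measure T)| ≤ ε := by
    rw [← Finset.sum_sub_distrib]
    refine (Finset.abs_sum_le_sum_abs _ _).trans (le_trans (Finset.sum_le_sum fun j _ => ?_) h2.le)
    rw [← mul_sub, abs_mul]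
    exact mul_le_of_le_one_left (abs_nonneg _) (hf0 i _)
  rw [abs_le] at *
  constructor <;> linarith [k1.1, k1.2, k2.1, k2.2, k3.1, k3.2]

theorem aux_bind {S T : Type*} [TopologicalSpace S] [MeasurableSpace S] [OpensMeasurableSpace S]
    [TopologicalSpace T] [MeasurableSpace T] [OpensMeasurableSpace T]
    (K : S → ProbabilityMeasure T) (hK : Continuous K)
    (hKm : Measurable fun x => (K x : Measure T))
    (B : ProbabilityMeasure S → ProbabilityMeasure T)
    (hB : ∀ μ, (B μ : Measure T) = (μ : Measure S).bind fun x => (K x : Measure T)) :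
    Continuous B := by
  rw [continuous_iff_continuousAt]
  intro μ
  refine ProbabilityMeasure.tendsto_iff_forall_lintegral_tendsto.2 fun g => ?_
  let h : S → ℝ≥0 := fun x => (K x).toFiniteMeasure.testAgainstNN g
  have hc : Continuous h := (FiniteMeasure.continuous_testAgainstNN_eval g).comp
    (ProbabilityMeasure.toFiniteMeasure_continuous.comp hK)
  have hcoe : ∀ x, (h x : ℝ≥0∞) = ∫⁻ y, g y ∂(K x : Measure T) := fun x =>
    FiniteMeasure.testAgainstNN_coe_eq
  have hbd : ∀ x, h x ≤ nndist g 0 := by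
    intro x
    rw [← ENNReal.coe_le_coe, hcoe]
    refine (lintegral_mono (g := fun _ => ((nndist g 0 : ℝ≥0) : ℝ≥0∞)) fun y => ?_).trans ?_
    · exact ENNReal.coe_le_coe.2 (BoundedContinuousFunction.NNReal.upper_bound g y)
    · simp
  let H : BoundedContinuousFunction S ℝ≥0 := BoundedContinuousFunction.mkOfBound ⟨h, hc⟩ (nndist g 0) (by
    intro x y
    rw [NNReal.dist_eq, abs_le]
    have hx : (h x : ℝ) ≤ nndist g 0 := hbd x
    have hy : (h y : ℝ) ≤ nndist g 0 := hbd y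
    have := (h x).2
    have := (h y).2
    constructor <;> simp only [ContinuousMap.coe_mk] <;> linarith [(h x).coe_nonneg, (h y).coe_nonneg])
  have key : ∀ ν : ProbabilityMeasure S, ∫⁻ y, g y ∂(B ν : Measure T) = ∫⁻ x, H x ∂(ν : Measure S) := by
    intro ν
    rw [hB, Measure.lintegral_bind hKm.aemeasurable
      (measurable_coe_nnreal_ennreal_iff.2 g.continuous.measurable).aemeasurable]
    exact lintegral_congr fun x => (hcoe x).symm
  simp only [key]
  exact ProbabilityMeasure.tendsto_iff_forall_lintegral_tendsto.1 tendsto_id H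

/-- **Corollary (total variation continuity of `R'`).**
If the transition kernel `P` on `X` given `X×A` is weakly continuous and the observation
kernel `Q` on `Y` given `A×X` is continuous in total variation, then the kernel
`R'(dy|z,a)` on `Y` given `P(X)×A` is continuous in total variation: whenever
`z⁽ⁿ⁾ → z` weakly and `a⁽ⁿ⁾ → a`,
`sup_{C Borel} |R'(C|z⁽ⁿ⁾,a⁽ⁿ⁾) − R'(C|z,a)| → 0`. -/
theorem Rprime_totalVariation_continuous {X Y A : Type*}
    [MetricSpace X] [SecondCountableTopology X] [MeasurableSpace X] [BorelSpace X]
    [MetricSpace Y] [SecondCountableTopology Y] [MeasurableSpace Y] [BorelSpace Y]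
    [MetricSpace A] [SecondCountableTopology A] [MeasurableSpace A] [BorelSpace A]
    (P : X × A → ProbabilityMeasure X) (Q : A × X → ProbabilityMeasure Y)
    (hPmeas : Measurable fun p => (P p : Measure X))
    (hQmeas : Measurable fun p => (Q p : Measure Y))
    (hPcont : Continuous P)
    (hQtv : ∀ (u : ℕ → A × X) (v : A × X), Tendsto u atTop (𝓝 v) →
      Tendsto (fun n => ⨆ C : {C : Set Y // MeasurableSet C},
        |((Q (u n)) C.1 : ℝ) - ((Q v) C.1 : ℝ)|) atTop (𝓝 0)) :
    ∀ (zs : ℕ → ProbabilityMeasure X) (z : ProbabilityMeasure X) (as : ℕ → A) (a : A),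
      Tendsto zs atTop (𝓝 z) → Tendsto as atTop (𝓝 a) →
      Tendsto (fun n => ⨆ C : {C : Set Y // MeasurableSet C},
          |(Rprime P Q (zs n) (as n) C.1).toReal - (Rprime P Q z a C.1).toReal|)
        atTop (𝓝 0) := by
  intro zs z as a hz ha
  let K : X × A → ProbabilityMeasure (A × X) := fun r => (diracProba r.2).prod (P r)
  have hKc : Continuous K := ProbabilityMeasure.continuous_prod.comp
    ((continuous_diracProba.comp continuous_snd).prodMk hPcont)
  have hKm : Measurable fun r => (K r : Measure (A × X)) := by
    let κ : ProbabilityTheory.Kernel (X × A) X := ⟨fun r => (P r : Measure X), hPmeas⟩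
    have : ProbabilityTheory.IsMarkovKernel κ := ⟨fun r => (P r).2⟩
    let η : ProbabilityTheory.Kernel (X × A) A :=
      ProbabilityTheory.Kernel.deterministic Prod.snd measurable_snd
    have e : (fun r => (K r : Measure (A × X))) = fun r => (ProbabilityTheory.Kernel.prod η κ) r := by
      funext r
      rw [ProbabilityTheory.Kernel.prod_apply]
      simp only [η, ProbabilityTheory.Kernel.deterministic_apply]
      rfl
    rw [e]
    exact (ProbabilityTheory.Kernel.prod η κ).measurable
  let B : ProbabilityMeasure (X × A) → ProbabilityMeasure (A × X) := fun μ =>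
    ⟨(μ : Measure (X × A)).bind fun x => (K x : Measure (A × X)),
      isProbabilityMeasure_bind hKm.aemeasurable (Eventually.of_forall fun x => (K x).2)⟩
  have hBc : Continuous B := aux_bind K hKc hKm B fun μ => rfl
  let M : ProbabilityMeasure X → A → ProbabilityMeasure (A × X) := fun z a =>
    B (z.prod (diracProba a))
  have hM : Tendsto (fun n => M (zs n) (as n)) atTop (𝓝 (M z a)) := by
    have h1 : Tendsto (fun n => diracProba (as n)) atTop (𝓝 (diracProba a)) :=
      (continuous_diracProba.tendsto a).comp ha
    exact (hBc.tendsto _).comp ((ProbabilityMeasure.continuous_prod.tendsto (z, diracProba a)).comp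
      (hz.prodMk_nhds h1))
  have hQC : ∀ C : Set Y, MeasurableSet C → Measurable fun r => (Q r : Measure Y) C :=
    fun C hC => (Measure.measurable_coe hC).comp hQmeas
  have hR : ∀ (z : ProbabilityMeasure X) (a : A) (C : Set Y), MeasurableSet C →
      (Rprime P Q z a C).toReal = ∫ r, ((Q r) C : ℝ) ∂(M z a : Measure (A × X)) := by
    intro z a C hC
    have e : Rprime P Q z a C = ∫⁻ r, (Q r : Measure Y) C ∂(M z a : Measure (A × X)) := by
      change _ = ∫⁻ r, (Q r : Measure Y) C ∂(((z : Measure X).prod (Measure.dirac a)).bind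
        fun x => (K x : Measure (A × X)))
      have hm : Measurable fun r : X × A => ∫⁻ q, (Q q : Measure Y) C ∂(K r : Measure (A × X)) :=
        (Measure.measurable_lintegral (hQC C hC)).comp hKm
      rw [Measure.lintegral_bind hKm.aemeasurable (hQC C hC).aemeasurable,
        lintegral_prod _ hm.aemeasurable]
      refine lintegral_congr fun x => ?_
      have hm2 : Measurable fun y : A => ∫⁻ q, (Q q : Measure Y) C ∂(K (x, y) : Measure (A × X)) :=
        hm.comp measurable_prodMk_left
      rw [lintegral_dirac' _ hm2]
      change _ = ∫⁻ q, (Q q : Measure Y) C ∂((Measure.dirac a).prod (P (x, a) : Measure X))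
      rw [lintegral_prod _ (hQC C hC).aemeasurable,
        lintegral_dirac' _ (Measurable.lintegral_prod_right (hQC C hC))]
    rw [e, ← integral_toReal (hQC C hC).aemeasurable
      (Eventually.of_forall fun r => measure_lt_top _ _)]
    rfl
  let D : A × X → A × X → ℝ := fun r s => ⨆ C : {C : Set Y // MeasurableSet C},
    |((Q r) C.1 : ℝ) - ((Q s) C.1 : ℝ)|
  have hQ1 : ∀ r (C : Set Y), ((Q r) C : ℝ) ≤ 1 := fun r C => by
    exact_mod_cast (Q r).apply_le_one C
  have hQ0 : ∀ r (C : Set Y), (0 : ℝ) ≤ (Q r) C := fun r C => NNReal.coe_nonneg _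
  have hDbdd : ∀ r s, BddAbove (Set.range fun C : {C : Set Y // MeasurableSet C} =>
      |((Q r) C.1 : ℝ) - ((Q s) C.1 : ℝ)|) := by
    intro r s
    refine ⟨1, ?_⟩
    rintro _ ⟨C, rfl⟩
    simp only [abs_le]
    constructor <;> linarith [hQ0 r C.1, hQ0 s C.1, hQ1 r C.1, hQ1 s C.1]
  have hle : ∀ (C : {C : Set Y // MeasurableSet C}) r s,
      |((Q r) C.1 : ℝ) - ((Q s) C.1 : ℝ)| ≤ D r s := fun C r s => le_ciSup (hDbdd r s) C
  have : Nonempty {C : Set Y // MeasurableSet C} := ⟨⟨∅, MeasurableSet.empty⟩⟩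
  have hDs : ∀ r s, D r s = D s r := fun r s => by simp only [D, abs_sub_comm]
  have hD0 : ∀ r, D r r = 0 := fun r => by simp [D]
  have htri : ∀ r s t, D r t ≤ D r s + D s t := by
    intro r s t
    refine ciSup_le fun C => ?_
    exact (abs_sub_le _ ((Q s) C.1 : ℝ) _).trans (add_le_add (hle C r s) (hle C s t))
  have hDc : ∀ y, Continuous fun x => D x y := by
    intro y
    rw [continuous_iff_seqContinuous]
    intro u v huv
    have h0 : Tendsto (fun n => D (u n) v) atTop (𝓝 0) := hQtv u v huv
    rw [tendsto_iff_dist_tendsto_zero]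
    refine squeeze_zero (fun _ => dist_nonneg) (fun n => ?_) h0
    rw [Real.dist_eq, abs_le]
    have t1 := htri (u n) v y
    have t2 := htri v (u n) y
    rw [hDs v (u n)] at t2
    simp only [Function.comp]
    constructor <;> linarith
  have hcore := aux_core hM (fun (C : {C : Set Y // MeasurableSet C}) r => ((Q r) C.1 : ℝ))
    (fun C => (hQC C.1 C.2).ennreal_toReal)
    (fun C r => abs_le.2 ⟨by linarith [hQ0 r C.1], hQ1 r C.1⟩) D hle hDc hDs hD0
  rw [Metric.tendsto_nhds]
  intro ε hε
  filter_upwards [hcore (ε / 16) (by linarith)] with n hn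
  have hs : (⨆ C : {C : Set Y // MeasurableSet C},
      |(Rprime P Q (zs n) (as n) C.1).toReal - (Rprime P Q z a C.1).toReal|) ≤ ε / 2 := by
    refine ciSup_le fun C => ?_
    rw [hR _ _ _ C.2, hR _ _ _ C.2]
    linarith [hn C]
  have hs0 : 0 ≤ (⨆ C : {C : Set Y // MeasurableSet C},
      |(Rprime P Q (zs n) (as n) C.1).toReal - (Rprime P Q z a C.1).toReal|) :=
    Real.iSup_nonneg fun C => abs_nonneg _
  rw [Real.dist_eq, sub_zero, abs_of_nonneg hs0]
  linarith
end

section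
/- Suppose the stochastic kernel P(dx′|x,a) on X given X×A is weakly continuous and the stochastic kernel Q(dy|a,x) on Y given A×X is continuous in total variation. Then: (1) the stochastic kernel R′(dy|z,a) on Y given P(X)×A is setwise continuous; (2) every stochastic kernel H on X given P(X)×A×Y satisfying the disintegration identity (3.4) satisfies Assumption (H); and (3) for any such H, the stochastic kernel q on P(X) given P(X)×A, defined by q(D|z,a) = ∫_Y 1{H(z,a,y) ∈ D} R′(dy|z,a), is weakly continuous. -/
open MeasureTheory Filter Topology
open scoped ENNReal NNReal

/-- The joint kernel `R(B×C|z,a) = ∫_X ∫_B Q(C|a,x') P(dx'|x,a) z(dx)` of formula (3.3). -/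
noncomputable def Rfun {X Y A : Type*} [MeasurableSpace X] [MeasurableSpace Y]
    (P : X × A → ProbabilityMeasure X) (Q : A × X → ProbabilityMeasure Y)
    (z : ProbabilityMeasure X) (a : A) (B : Set X) (C : Set Y) : ℝ≥0∞ :=
  ∫⁻ x, (∫⁻ x' in B, ((Q (a, x') : Measure Y) C) ∂((P (x, a) : Measure X))) ∂(z : Measure X)

/-- The marginal observation kernel `R'(dy|z,a)` on `Y` given `P(X)×A`, as a measure. -/
noncomputable def RprimeM {X Y A : Type*} [MeasurableSpace X] [MeasurableSpace Y]
    (P : X × A → ProbabilityMeasure X) (Q : A × X → ProbabilityMeasure Y)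
    (z : ProbabilityMeasure X) (a : A) : Measure Y :=
  ((z : Measure X).bind fun x => (P (x, a) : Measure X)).bind fun x' => (Q (a, x') : Measure Y)

/-- The disintegration identity (3.4). -/
def Disint {X Y A : Type*} [MeasurableSpace X] [MeasurableSpace Y]
    (P : X × A → ProbabilityMeasure X) (Q : A × X → ProbabilityMeasure Y)
    (H : ProbabilityMeasure X × A × Y → ProbabilityMeasure X) : Prop :=
  ∀ (z : ProbabilityMeasure X) (a : A) (B : Set X) (C : Set Y),
    MeasurableSet B → MeasurableSet C →
      Rfun P Q z a B C = ∫⁻ y in C, ((H (z, a, y) : Measure X) B) ∂(RprimeM P Q z a)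

/-- Assumption (H). -/
def AssumptionH {X Y A : Type*}
    [MeasurableSpace X] [TopologicalSpace X] [MeasurableSpace Y] [TopologicalSpace A]
    [OpensMeasurableSpace X]
    (P : X × A → ProbabilityMeasure X) (Q : A × X → ProbabilityMeasure Y)
    (H : ProbabilityMeasure X × A × Y → ProbabilityMeasure X) : Prop :=
  ∀ (zs : ℕ → ProbabilityMeasure X) (z : ProbabilityMeasure X) (as : ℕ → A) (a : A),
    Tendsto zs atTop (𝓝 z) → Tendsto as atTop (𝓝 a) →
    ∃ φ : ℕ → ℕ, StrictMono φ ∧ ∃ C : Set Y, MeasurableSet C ∧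
      RprimeM P Q z a C = 1 ∧
      ∀ y ∈ C, Tendsto (fun k => H (zs (φ k), as (φ k), y)) atTop (𝓝 (H (z, a, y)))

/-- The Borel σ-algebra of the weak topology on `P(X)`. -/
noncomputable instance probabilityMeasureMeasurableSpace {X : Type*}
    [MeasurableSpace X] [TopologicalSpace X] [OpensMeasurableSpace X] :
    MeasurableSpace (ProbabilityMeasure X) := borel _

/-- The transition kernel `q(D|z,a) = ∫_Y 1{H(z,a,y) ∈ D} R'(dy|z,a)` of the COMDP. -/
noncomputable def qker {X Y A : Type*}
    [MeasurableSpace X] [TopologicalSpace X] [OpensMeasurableSpace X] [MeasurableSpace Y]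
    (P : X × A → ProbabilityMeasure X) (Q : A × X → ProbabilityMeasure Y)
    (H : ProbabilityMeasure X × A × Y → ProbabilityMeasure X)
    (z : ProbabilityMeasure X) (a : A) : Measure (ProbabilityMeasure X) :=
  (RprimeM P Q z a).map fun y => H (z, a, y)

lemma tv_nonneg_bound {Y : Type*} [MeasurableSpace Y] (μ ν : Measure Y) [IsProbabilityMeasure μ]
    [IsProbabilityMeasure ν] (ε K : ℝ) (hK : 0 ≤ K)
    (h : ∀ C, MeasurableSet C → |μ.real C - ν.real C| ≤ ε)
    (g : Y → ℝ) (hg : Measurable g) (h0 : ∀ y, 0 ≤ g y) (h1 : ∀ y, g y ≤ K) :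
    |∫ y, g y ∂μ - ∫ y, g y ∂ν| ≤ ε * K := by
  have hint : ∀ (m : Measure Y) [IsProbabilityMeasure m], Integrable g m := fun m _ =>
    Integrable.of_bound hg.aestronglyMeasurable K
      (Eventually.of_forall fun y => by rw [Real.norm_eq_abs, abs_of_nonneg (h0 y)]; exact h1 y)
  have hanti : ∀ (m : Measure Y) [IsProbabilityMeasure m],
      IntegrableOn (fun t => m.real {a | t ≤ g a}) (Set.Ioc 0 K) := fun m _ => by
    have ha : Antitone (fun t => m.real {a | t ≤ g a}) := fun s t hst =>
      measureReal_mono (fun y (hy : t ≤ g y) => hst.trans hy)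
    refine Measure.integrableOn_of_bounded (M := 1) (by simp) ha.measurable.aestronglyMeasurable ?_
    exact Eventually.of_forall fun t => by
      rw [Real.norm_eq_abs, abs_of_nonneg measureReal_nonneg]; exact measureReal_le_one
  rw [(hint μ).integral_eq_integral_Ioc_meas_le (M := K) (Eventually.of_forall h0)
      (Eventually.of_forall h1),
    (hint ν).integral_eq_integral_Ioc_meas_le (M := K) (Eventually.of_forall h0)
      (Eventually.of_forall h1), ← integral_sub (hanti μ) (hanti ν), ← Real.norm_eq_abs]
  refine (norm_setIntegral_le_of_norm_le_const (C := ε) (by simp) ?_).trans ?_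
  · intro t _
    rw [Real.norm_eq_abs]
    exact h _ (measurableSet_le measurable_const hg)
  · simp [hK]

lemma tv_bound {Y : Type*} [MeasurableSpace Y] (μ ν : Measure Y) [IsProbabilityMeasure μ]
    [IsProbabilityMeasure ν] (ε K : ℝ) (hK : 0 ≤ K)
    (h : ∀ C, MeasurableSet C → |μ.real C - ν.real C| ≤ ε)
    (g : Y → ℝ) (hg : Measurable g) (h1 : ∀ y, |g y| ≤ K) :
    |∫ y, g y ∂μ - ∫ y, g y ∂ν| ≤ ε * (2 * K) := by
  have hint : ∀ (m : Measure Y) [IsProbabilityMeasure m], Integrable g m := fun m _ =>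
    Integrable.of_bound hg.aestronglyMeasurable K
      (Eventually.of_forall fun y => by rw [Real.norm_eq_abs]; exact h1 y)
  have := tv_nonneg_bound μ ν ε (2 * K) (by positivity) h (fun y => g y + K) (hg.add_const K)
    (fun y => by linarith [(abs_le.1 (h1 y)).1]) (fun y => by linarith [(abs_le.1 (h1 y)).2])
  rw [integral_add (hint μ) (integrable_const _), integral_add (hint ν) (integrable_const _)] at this
  simpa using this

lemma uniform_weak {X I : Type*} [MetricSpace X] [SecondCountableTopology X] [MeasurableSpace X]
    [BorelSpace X] (μs : ℕ → ProbabilityMeasure X) (μ : ProbabilityMeasure X)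
    (hμ : Tendsto μs atTop (𝓝 μ)) (Gs : ℕ → I → X → ℝ) (G : I → X → ℝ) (K : ℝ)
    (hGsm : ∀ n i, Measurable (Gs n i)) (hGm : ∀ i, Measurable (G i))
    (hGsK : ∀ n i x, |Gs n i x| ≤ K) (hGK : ∀ i x, |G i x| ≤ K)
    (hcont : ∀ x, ∀ ε > 0, ∃ r > 0, ∃ m : ℕ, ∀ x' ∈ Metric.ball x r, ∀ i,
      |G i x' - G i x| ≤ ε ∧ ∀ n ≥ m, |Gs n i x' - G i x| ≤ ε)
    (ε : ℝ) (hε : 0 < ε) :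
    ∀ᶠ n in atTop, ∀ i, |∫ x, Gs n i x ∂(μs n : Measure X) - ∫ x, G i x ∂(μ : Measure X)| ≤ ε := by
  rcases isEmpty_or_nonempty I with hI | ⟨⟨i₀⟩⟩
  · exact Eventually.of_forall fun n i => (hI.false i).elim
  have hX : Nonempty X := by
    by_contra hX
    rw [not_nonempty_iff] at hX
    have : (μ : Measure X) Set.univ = 1 := measure_univ
    simp [Set.univ_eq_empty_iff.2 hX] at this
  have hK : 0 ≤ K := (abs_nonneg _).trans (hGK i₀ hX.some)
  set δ := ε / 6 with hδ
  have hδ0 : 0 < δ := by positivity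
  choose r hr m hm using fun x => hcont x δ hδ0
  obtain ⟨s, hsc, hsU⟩ := TopologicalSpace.countable_cover_nhds
    (fun x => Metric.ball_mem_nhds x (hr x))
  have hsne : s.Nonempty := by
    by_contra h
    rw [Set.not_nonempty_iff_eq_empty] at h
    rw [h] at hsU
    simp only [Set.mem_empty_iff_false, Set.iUnion_of_empty, Set.iUnion_empty] at hsU
    exact absurd hsU.symm (Set.univ_nonempty.ne_empty)
  obtain ⟨c, hc⟩ := hsc.exists_eq_range hsne
  have hcov : ∀ x, ∃ k, x ∈ Metric.ball (c k) (r (c k)) := by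
    intro x
    have : x ∈ ⋃ x ∈ s, Metric.ball x (r x) := by rw [hsU]; trivial
    simpa [hc] using this
  let φ : ℕ → X → ℝ := fun k x => max 0 (r (c k) - dist x (c k))
  have φc : ∀ k, Continuous (φ k) := fun k => by fun_prop
  have φ0 : ∀ k x, 0 ≤ φ k x := fun k x => le_max_left _ _
  have φpos : ∀ k x, x ∈ Metric.ball (c k) (r (c k)) → 0 < φ k x := fun k x hx => by
    rw [Metric.mem_ball] at hx
    exact lt_max_of_lt_right (by linarith)
  have φzero : ∀ k x, x ∉ Metric.ball (c k) (r (c k)) → φ k x = 0 := fun k x hx => by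
    rw [Metric.mem_ball, not_lt] at hx
    exact max_eq_left (by linarith)
  let S : ℕ → X → ℝ := fun N x => ∑ k ∈ Finset.range N, φ k x
  have Sc : ∀ N, Continuous (S N) := fun N => continuous_finsetSum _ fun k _ => φc k
  have S0 : ∀ N x, 0 ≤ S N x := fun N x => Finset.sum_nonneg fun k _ => φ0 k x
  let η : ℕ → ℝ := fun N => 1 / ((N : ℝ) + 1)
  have η0 : ∀ N, 0 < η N := fun N => by positivity
  have hden : ∀ N x, 0 < η N + S N x := fun N x => by linarith [η0 N, S0 N x]
  let w : ℕ → X → ℝ := fun N x => η N / (η N + S N x)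
  have wc : ∀ N, Continuous (w N) := fun N =>
    continuous_const.div (continuous_const.add (Sc N)) fun x => (hden N x).ne'
  have w0 : ∀ N x, 0 ≤ w N x := fun N x => div_nonneg (η0 N).le (hden N x).le
  have w1 : ∀ N x, w N x ≤ 1 := fun N x => (div_le_one (hden N x)).2 (by linarith [S0 N x])
  let ψ : ℕ → ℕ → X → ℝ := fun N k x => φ k x / (η N + S N x)
  have ψc : ∀ N k, Continuous (ψ N k) := fun N k =>
    (φc k).div (continuous_const.add (Sc N)) fun x => (hden N x).ne'
  have ψ0 : ∀ N k x, 0 ≤ ψ N k x := fun N k x => div_nonneg (φ0 k x) (hden N x).le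
  have wψ : ∀ N x, w N x + ∑ k ∈ Finset.range N, ψ N k x = 1 := fun N x => by
    simp only [w, ψ]
    rw [← Finset.sum_div, ← add_div]
    exact div_self (hden N x).ne'
  have ψ1 : ∀ N, ∀ k ∈ Finset.range N, ∀ x, ψ N k x ≤ 1 := fun N k hk x => by
    have h1 := Finset.single_le_sum (f := fun k => ψ N k x) (fun k _ => ψ0 N k x) hk
    have h2 := wψ N x
    have h3 := w0 N x
    linarith
  have ηlim : Tendsto η atTop (𝓝 0) := tendsto_one_div_add_atTop_nhds_zero_nat
  have wlim : ∀ x, Tendsto (fun N => w N x) atTop (𝓝 0) := fun x => by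
    obtain ⟨k, hk⟩ := hcov x
    have hp := φpos k x hk
    have hle : ∀ᶠ N in atTop, w N x ≤ η N / φ k x := by
      filter_upwards [eventually_gt_atTop k] with N hN
      apply div_le_div_of_nonneg_left (η0 N).le hp
      have := Finset.single_le_sum (f := fun k => φ k x) (fun k _ => φ0 k x)
        (Finset.mem_range.2 hN)
      have h3 := η0 N
      simp only [S] at *
      linarith
    refine tendsto_of_tendsto_of_tendsto_of_le_of_le' tendsto_const_nhds ?_
      (Eventually.of_forall fun N => w0 N x) hle
    simpa using ηlim.div_const (φ k x)
  have wint : Tendsto (fun N => ∫ x, w N x ∂(μ : Measure X)) atTop (𝓝 0) := by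
    have := tendsto_integral_of_dominated_convergence (μ := (μ : Measure X)) (F := w)
      (f := fun _ => 0) (fun _ => 1)
      (fun N => (wc N).measurable.aestronglyMeasurable) (integrable_const _)
      (fun N => Eventually.of_forall fun x => by
        rw [Real.norm_eq_abs, abs_of_nonneg (w0 N x)]; exact w1 N x)
      (Eventually.of_forall wlim)
    simpa using this
  have wint' : Tendsto (fun N => K * ∫ x, w N x ∂(μ : Measure X)) atTop (𝓝 0) := by
    simpa using wint.const_mul K
  obtain ⟨N, hN⟩ := (wint'.eventually (gt_mem_nhds hδ0)).exists
  -- convergence of integrals of bounded continuous functions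
  have key : ∀ f : X → ℝ, Continuous f → (∀ x, 0 ≤ f x) → (∀ x, f x ≤ 1) →
      Tendsto (fun n => ∫ x, f x ∂(μs n : Measure X)) atTop (𝓝 (∫ x, f x ∂(μ : Measure X))) := by
    intro f hf f0 f1
    have := (ProbabilityMeasure.tendsto_iff_forall_integral_tendsto.1 hμ)
      (BoundedContinuousFunction.ofNormedAddCommGroup f hf 1 (fun x => by
        rw [Real.norm_eq_abs, abs_of_nonneg (f0 x)]; exact f1 x))
    simpa using this
  have e1 : ∀ᶠ n in atTop, K * ∫ x, w N x ∂(μs n : Measure X) < δ :=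
    ((key _ (wc N) (w0 N) (w1 N)).const_mul K).eventually (gt_mem_nhds hN)
  have e2 : ∀ᶠ n in atTop, ∑ k ∈ Finset.range N,
      K * |∫ x, ψ N k x ∂(μs n : Measure X) - ∫ x, ψ N k x ∂(μ : Measure X)| < δ := by
    have : Tendsto (fun n => ∑ k ∈ Finset.range N,
      K * |∫ x, ψ N k x ∂(μs n : Measure X) - ∫ x, ψ N k x ∂(μ : Measure X)|) atTop
        (𝓝 (∑ k ∈ Finset.range N, 0)) := by
      refine tendsto_finsetSum _ fun k hk => ?_
      have h1 := (((key _ (ψc N k) (ψ0 N k) (ψ1 N k hk)).sub_const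
        (∫ x, ψ N k x ∂(μ : Measure X))).abs).const_mul K
      simpa using h1
    rw [Finset.sum_const_zero] at this
    exact this.eventually (gt_mem_nhds hδ0)
  have e3 : ∀ᶠ n in atTop, ∀ k ∈ Finset.range N, m (c k) ≤ n :=
    (Finset.eventually_all _).2 fun k _ => eventually_ge_atTop _
  -- approximation estimate
  have approx : ∀ (ν : ProbabilityMeasure X) (i : I) (g : X → ℝ), Measurable g → (∀ x, |g x| ≤ K) →
      (∀ k ∈ Finset.range N, ∀ x ∈ Metric.ball (c k) (r (c k)), |g x - G i (c k)| ≤ δ) →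
      K * ∫ x, w N x ∂(ν : Measure X) < δ →
      |∫ x, g x ∂(ν : Measure X) - ∑ k ∈ Finset.range N, G i (c k) * ∫ x, ψ N k x ∂(ν : Measure X)|
        ≤ 2 * δ := by
    intro ν i g hg hgK hgc hw
    have ig : Integrable g (ν : Measure X) :=
      Integrable.of_bound hg.aestronglyMeasurable K (Eventually.of_forall hgK)
    have iw : Integrable (w N) (ν : Measure X) :=
      Integrable.of_bound (wc N).measurable.aestronglyMeasurable 1 (Eventually.of_forall fun x => by
        rw [Real.norm_eq_abs, abs_of_nonneg (w0 N x)]; exact w1 N x)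
    have iψ : ∀ k ∈ Finset.range N, Integrable (ψ N k) (ν : Measure X) := fun k hk =>
      Integrable.of_bound (ψc N k).measurable.aestronglyMeasurable 1 (Eventually.of_forall fun x => by
        rw [Real.norm_eq_abs, abs_of_nonneg (ψ0 N k x)]; exact ψ1 N k hk x)
    have i2 : ∀ k ∈ Finset.range N, Integrable (fun x => G i (c k) * ψ N k x) (ν : Measure X) :=
      fun k hk => (iψ k hk).const_mul _
    simp_rw [← integral_const_mul]
    rw [← integral_finsetSum _ i2, ← integral_sub ig (integrable_finsetSum _ i2), ← Real.norm_eq_abs]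
    have hb : ∀ x, ‖g x - ∑ k ∈ Finset.range N, G i (c k) * ψ N k x‖ ≤ K * w N x + δ := by
      intro x
      have h1 : g x - ∑ k ∈ Finset.range N, G i (c k) * ψ N k x
          = g x * w N x + ∑ k ∈ Finset.range N, (g x - G i (c k)) * ψ N k x := by
        simp_rw [sub_mul]
        rw [Finset.sum_sub_distrib, ← Finset.mul_sum]
        have := wψ N x
        linear_combination (-g x) * this
      rw [h1, Real.norm_eq_abs]
      refine (abs_add_le _ _).trans (add_le_add ?_ ?_)
      · rw [abs_mul, abs_of_nonneg (w0 N x)]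
        exact mul_le_mul_of_nonneg_right (hgK x) (w0 N x)
      · refine (Finset.abs_sum_le_sum_abs _ _).trans ?_
        have h2 : ∀ k ∈ Finset.range N, |(g x - G i (c k)) * ψ N k x| ≤ δ * ψ N k x := by
          intro k hk
          rw [abs_mul, abs_of_nonneg (ψ0 N k x)]
          by_cases hx : x ∈ Metric.ball (c k) (r (c k))
          · exact mul_le_mul_of_nonneg_right (hgc k hk x hx) (ψ0 N k x)
          · have : ψ N k x = 0 := by simp [ψ, φzero k x hx]
            simp [this]
        refine (Finset.sum_le_sum h2).trans ?_
        rw [← Finset.mul_sum]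
        have h3 := wψ N x
        have h4 := w0 N x
        nlinarith
    refine (norm_integral_le_of_norm_le ((iw.const_mul K).add (integrable_const δ))
      (Eventually.of_forall hb)).trans ?_
    simp only [Pi.add_apply]
    rw [integral_add (iw.const_mul K) (integrable_const δ), integral_const_mul]
    simp
    linarith
  filter_upwards [e1, e2, e3] with n h1 h2 h3 i
  have a1 := approx (μs n) i (Gs n i) (hGsm n i) (hGsK n i)
    (fun k hk x hx => (hm (c k) x hx i).2 n (h3 k hk)) h1
  have a2 := approx μ i (G i) (hGm i) (hGK i) (fun k hk x hx => (hm (c k) x hx i).1) hN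
  have a3 : |∑ k ∈ Finset.range N, G i (c k) * ∫ x, ψ N k x ∂(μs n : Measure X) -
      ∑ k ∈ Finset.range N, G i (c k) * ∫ x, ψ N k x ∂(μ : Measure X)| ≤ δ := by
    rw [← Finset.sum_sub_distrib]
    refine (Finset.abs_sum_le_sum_abs _ _).trans (le_trans (Finset.sum_le_sum fun k hk => ?_) h2.le)
    rw [← mul_sub, abs_mul]
    exact mul_le_mul_of_nonneg_right (hGK i _) (abs_nonneg _)
  rw [abs_le] at *
  constructor <;> linarith [a1.1, a1.2, a2.1, a2.2, a3.1, a3.2]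

/-- A countable convergence-determining family. -/
noncomputable def cdFun (X : Type*) [MetricSpace X] [SecondCountableTopology X]
    (p : Finset (TopologicalSpace.countableBasis X) × ℕ) : BoundedContinuousFunction X ℝ≥0 :=
  thickenedIndicator (δ := (1 : ℝ) / (p.2 + 1)) (by positivity)
    (⋃ t ∈ p.1, (t : Set X))ᶜ

lemma tendsto_of_cdFun {X : Type*} [MetricSpace X] [SecondCountableTopology X] [MeasurableSpace X]
    [BorelSpace X] (μs : ℕ → ProbabilityMeasure X) (μ : ProbabilityMeasure X)
    (h : ∀ p, Tendsto (fun n => ∫ x, (cdFun X p x : ℝ) ∂(μs n : Measure X)) atTop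
      (𝓝 (∫ x, (cdFun X p x : ℝ) ∂(μ : Measure X)))) :
    Tendsto μs atTop (𝓝 μ) := by
  refine tendsto_of_forall_isClosed_limsup_real_le' fun F hF => ?_
  refine le_of_forall_pos_le_add fun ε hε => ?_
  -- finite union inside the complement
  obtain ⟨T, hT1, hT2⟩ : ∃ T : Finset (TopologicalSpace.countableBasis X),
      (⋃ t ∈ T, (t : Set X)) ⊆ Fᶜ ∧
      (μ : Measure X).real (⋃ t ∈ T, (t : Set X))ᶜ < (μ : Measure X).real F + ε / 2 := by
    by_cases hz : μ Fᶜ = 0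
    · refine ⟨∅, by simp, ?_⟩
      have h1 : (μ : Measure X).real Fᶜ = 0 := congrArg NNReal.toReal hz
      rw [probReal_compl_eq_one_sub hF.measurableSet] at h1
      simp only [Finset.notMem_empty, Set.iUnion_of_empty, Set.iUnion_empty, Set.compl_empty,
        probReal_univ]
      linarith
    have hpos : 0 < μ Fᶜ := pos_iff_ne_zero.2 hz
    have hlt : μ Fᶜ - (ε / 4).toNNReal < μ Fᶜ := tsub_lt_self hpos (by simpa using hε)
    obtain ⟨T, hTS, hTm, hTF⟩ := ProbabilityMeasure.exists_lt_measure_biUnion_of_isOpen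
      (S := TopologicalSpace.countableBasis X) μ
      (fun u hu x hx => by
        obtain ⟨s, hs, hxs, hsu⟩ :=
          (TopologicalSpace.isBasis_countableBasis X).exists_subset_of_mem_open hx hu
        exact ⟨s, hs, (TopologicalSpace.isOpen_of_mem_countableBasis hs).mem_nhds hxs, hsu⟩)
      hF.isOpen_compl hlt
    classical
    refine ⟨T.attach.image fun t => ⟨t.1, hTS t.1 t.2⟩, ?_⟩
    have hU : (⋃ t ∈ T.attach.image fun t => (⟨t.1, hTS t.1 t.2⟩ : TopologicalSpace.countableBasis X),
        (t : Set X)) = ⋃ t ∈ T, t := by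
      ext x
      simp only [Finset.mem_image, Finset.mem_attach, true_and, Set.mem_iUnion, exists_prop]
      constructor
      · rintro ⟨_, ⟨t, rfl⟩, hx⟩
        exact ⟨t.1, t.2, hx⟩
      · rintro ⟨t, ht, hx⟩
        exact ⟨_, ⟨⟨t, ht⟩, rfl⟩, hx⟩
    rw [hU]
    refine ⟨hTF, ?_⟩
    have hUm : MeasurableSet (⋃ t ∈ T, t) := by
      refine Finset.measurableSet_biUnion _ fun t ht => ?_
      exact (TopologicalSpace.isOpen_of_mem_countableBasis (hTS t ht)).measurableSet
    rw [probReal_compl_eq_one_sub hUm]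
    have h1 : (μ : Measure X).real Fᶜ = 1 - (μ : Measure X).real F :=
      probReal_compl_eq_one_sub hF.measurableSet
    have h2 : (μ : Measure X).real Fᶜ - ε / 4 ≤ (μ : Measure X).real (⋃ t ∈ T, t) := by
      have := NNReal.coe_le_coe.2 hTm.le
      have h3 : ((μ Fᶜ : ℝ≥0) : ℝ) - ((ε / 4).toNNReal : ℝ) ≤ ((μ Fᶜ - (ε / 4).toNNReal : ℝ≥0) : ℝ) := by
        rw [NNReal.coe_sub_def]; exact le_max_left _ _
      rw [Real.coe_toNNReal _ (by positivity)] at h3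
      exact h3.trans this
    linarith
  set U := (⋃ t ∈ T, (t : Set X)) with hUdef
  have hUo : IsOpen U := isOpen_biUnion fun t _ =>
    TopologicalSpace.isOpen_of_mem_countableBasis t.2
  have key₁ : Tendsto (fun n : ℕ ↦ ∫ ω, (cdFun X (T, n) ω : ℝ) ∂(μ : Measure X)) atTop
      (𝓝 ((μ : Measure X).real Uᶜ)) :=
    tendsto_integral_thickenedIndicator_of_isClosed μ hUo.isClosed_compl
      (δs := fun n ↦ (1 : ℝ) / (n + 1))
      (fun _ ↦ by positivity) tendsto_one_div_add_atTop_nhds_zero_nat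
  obtain ⟨M, hM⟩ := (key₁.eventually (gt_mem_nhds hT2)).exists
  have hM' : ∫ ω, (cdFun X (T, M) ω : ℝ) ∂(μ : Measure X) < (μ : Measure X).real F + ε := by linarith
  have ev : ∀ᶠ n in atTop, (μs n : Measure X).real F ≤ (μ : Measure X).real F + ε := by
    filter_upwards [(h (T, M)).eventually (gt_mem_nhds hM')] with n hn
    refine le_trans ?_ hn.le
    rw [← integral_indicator_one hF.measurableSet]
    refine integral_mono ?_ (integrable_thickenedIndicator _ _) ?_
    · exact (integrable_indicator_iff hF.measurableSet).mpr (integrable_const _).integrableOn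
    · have h1 : _ ≤ fun x => ((cdFun X (T, M) x : ℝ≥0) : ℝ) :=
        indicator_le_thickenedIndicator (δ := (1 : ℝ) / (M + 1)) (by positivity) Uᶜ
      refine le_trans ?_ h1
      intro x
      have : F ⊆ Uᶜ := Set.subset_compl_comm.1 hT1
      by_cases hx : x ∈ F
      · simp [hx, this hx]
      · simp [hx, Set.indicator_nonneg]
  refine Filter.limsup_le_of_le ?_ ev
  exact isCoboundedUnder_le_of_le atTop (x := 0) (by simp)

lemma uniform_weak' {X A I : Type*} [MetricSpace X] [SecondCountableTopology X] [MeasurableSpace X]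
    [BorelSpace X] [TopologicalSpace A] (μs : ℕ → ProbabilityMeasure X) (μ : ProbabilityMeasure X)
    (hμ : Tendsto μs atTop (𝓝 μ)) (as : ℕ → A) (a : A) (ha : Tendsto as atTop (𝓝 a))
    (F : I → X × A → ℝ) (K : ℝ)
    (hFm : ∀ i a, Measurable (fun x => F i (x, a)))
    (hFK : ∀ i p, |F i p| ≤ K)
    (hcont : ∀ p, ∀ ε > 0, ∀ᶠ p' in 𝓝 p, ∀ i, |F i p' - F i p| ≤ ε)
    (ε : ℝ) (hε : 0 < ε) :
    ∀ᶠ n in atTop, ∀ i,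
      |∫ x, F i (x, as n) ∂(μs n : Measure X) - ∫ x, F i (x, a) ∂(μ : Measure X)| ≤ ε := by
  refine uniform_weak μs μ hμ (fun n i x => F i (x, as n)) (fun i x => F i (x, a)) K
    (fun n i => hFm i _) (fun i => hFm i _) (fun n i x => hFK i _) (fun i x => hFK i _) ?_ ε hε
  intro x ε hε
  have h := hcont (x, a) ε hε
  rw [nhds_prod_eq] at h
  obtain ⟨p1, hp1, p2, hp2, h12⟩ := Filter.eventually_prod_iff.1 h
  obtain ⟨r, hr, hball⟩ := Metric.eventually_nhds_iff_ball.1 hp1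
  obtain ⟨m, hm⟩ := eventually_atTop.1 (ha.eventually hp2)
  exact ⟨r, hr, m, fun x' hx' i => ⟨h12 (hball x' hx') hp2.self_of_nhds i,
    fun n hn => h12 (hball x' hx') (hm n hn) i⟩⟩

instance probabilityMeasureBorelSpace {X : Type*}
    [MeasurableSpace X] [TopologicalSpace X] [OpensMeasurableSpace X] :
    BorelSpace (ProbabilityMeasure X) := ⟨rfl⟩

lemma measurable_coe_pm {X : Type*} [MetricSpace X] [MeasurableSpace X] [BorelSpace X] :
    Measurable (fun μ : ProbabilityMeasure X => (μ : Measure X)) := by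
  refine Measurable.measure_of_isPiSystem_of_isProbabilityMeasure
    (S := {s | IsOpen s}) (BorelSpace.measurable_eq) isPiSystem_isOpen ?_
  intro U hU
  have : LowerSemicontinuous (fun μ : ProbabilityMeasure X => (μ : Measure X) U) := by
    rw [lowerSemicontinuous_iff_le_liminf]
    intro μ
    exact ProbabilityMeasure.le_liminf_measure_open_of_tendsto tendsto_id hU
  exact this.measurable

lemma measurable_integral_kernel {α β : Type*} [MeasurableSpace α] [MeasurableSpace β]
    (κ : α → Measure β) (hκ : Measurable κ)
    (f : β → ℝ) (hf : Measurable f) (f0 : ∀ x, 0 ≤ f x) :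
    Measurable (fun a => ∫ x, f x ∂(κ a)) := by
  have : (fun a => ∫ x, f x ∂(κ a)) = fun a => (∫⁻ x, ENNReal.ofReal (f x) ∂(κ a)).toReal := by
    funext a
    exact integral_eq_lintegral_of_nonneg_ae (Eventually.of_forall f0) hf.aestronglyMeasurable
  rw [this]
  exact ((Measure.measurable_lintegral hf.ennreal_ofReal).comp hκ).ennreal_toReal

lemma integral_bind_nonneg {α β : Type*} [MeasurableSpace α] [MeasurableSpace β]
    (m : Measure α) (κ : α → Measure β) [∀ a, IsProbabilityMeasure (κ a)]
    (hκ : Measurable κ) (f : β → ℝ) (hf : Measurable f) (K : ℝ) (f0 : ∀ x, 0 ≤ f x)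
    (f1 : ∀ x, f x ≤ K) :
    ∫ x, f x ∂(m.bind κ) = ∫ a, ∫ x, f x ∂(κ a) ∂m := by
  rw [integral_eq_lintegral_of_nonneg_ae (Eventually.of_forall f0) hf.aestronglyMeasurable,
    integral_eq_lintegral_of_nonneg_ae (Eventually.of_forall fun a => integral_nonneg f0)
      (measurable_integral_kernel κ hκ f hf f0).aestronglyMeasurable,
    Measure.lintegral_bind hκ.aemeasurable hf.ennreal_ofReal.aemeasurable]
  congr 1
  refine lintegral_congr fun a => ?_
  rw [ofReal_integral_eq_lintegral_ofReal _ (Eventually.of_forall f0)]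
  exact Integrable.of_bound hf.aestronglyMeasurable K (Eventually.of_forall fun x => by
    rw [Real.norm_eq_abs, abs_of_nonneg (f0 x)]; exact f1 x)

lemma integral_mem_unit {β : Type*} [MeasurableSpace β] (m : Measure β) [IsProbabilityMeasure m]
    (f : β → ℝ) (hf : Measurable f) (f0 : ∀ x, 0 ≤ f x) (f1 : ∀ x, f x ≤ 1) :
    0 ≤ ∫ x, f x ∂m ∧ ∫ x, f x ∂m ≤ 1 := by
  refine ⟨integral_nonneg f0, ?_⟩
  have hi : Integrable f m := Integrable.of_bound hf.aestronglyMeasurable 1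
    (Eventually.of_forall fun x => by rw [Real.norm_eq_abs, abs_of_nonneg (f0 x)]; exact f1 x)
  have := integral_mono hi (integrable_const (1 : ℝ)) f1
  simpa using this

set_option linter.unusedSectionVars false

section mix
variable {X Y A : Type*}
    [MetricSpace X] [SecondCountableTopology X] [MeasurableSpace X] [BorelSpace X]
    [MetricSpace Y] [SecondCountableTopology Y] [MeasurableSpace Y] [BorelSpace Y]
    [MetricSpace A] [SecondCountableTopology A] [MeasurableSpace A] [BorelSpace A]

lemma meas_P {X Y A : Type*} [MeasurableSpace X] [MeasurableSpace Y] [MeasurableSpace A]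
    (P : X × A → ProbabilityMeasure Y) (hPmeas : Measurable fun p => (P p : Measure Y)) (a : A) :
    Measurable (fun x => (P (x, a) : Measure Y)) := by
  have h : Measurable (fun x : X => (x, a)) := by fun_prop
  exact hPmeas.comp h

lemma meas_Q {X Y A : Type*} [MeasurableSpace X] [MeasurableSpace Y] [MeasurableSpace A]
    (Q : A × X → ProbabilityMeasure Y) (hQmeas : Measurable fun p => (Q p : Measure Y)) (a : A) :
    Measurable (fun x => (Q (a, x) : Measure Y)) := by
  have h : Measurable (fun x : X => (a, x)) := by fun_prop
  exact hQmeas.comp h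

/-- The predictive law as a probability measure. -/
noncomputable def mixP {X A : Type*} [MeasurableSpace X] [MeasurableSpace A]
    (P : X × A → ProbabilityMeasure X) (hPmeas : Measurable fun p => (P p : Measure X))
    (z : ProbabilityMeasure X) (a : A) : ProbabilityMeasure X :=
  ⟨(z : Measure X).bind fun x => (P (x, a) : Measure X),
    isProbabilityMeasure_bind (meas_P P hPmeas a).aemeasurable
      (Eventually.of_forall fun _ => inferInstance)⟩

lemma mixP_tendsto (P : X × A → ProbabilityMeasure X)
    (hPmeas : Measurable fun p => (P p : Measure X)) (hPcont : Continuous P)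
    (zs : ℕ → ProbabilityMeasure X) (z : ProbabilityMeasure X) (as : ℕ → A) (a : A)
    (hz : Tendsto zs atTop (𝓝 z)) (ha : Tendsto as atTop (𝓝 a)) :
    Tendsto (fun n => mixP P hPmeas (zs n) (as n)) atTop (𝓝 (mixP P hPmeas z a)) := by
  refine tendsto_of_cdFun _ _ fun p => ?_
  have fc : Continuous (fun x => (cdFun X p x : ℝ)) :=
    NNReal.continuous_coe.comp (cdFun X p).continuous
  have fm := fc.measurable
  have f0 : ∀ x, 0 ≤ (cdFun X p x : ℝ) := fun x => NNReal.coe_nonneg _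
  have f1 : ∀ x, (cdFun X p x : ℝ) ≤ 1 := fun x => by
    exact_mod_cast thickenedIndicator_le_one _ _ x
  have hI : ∀ z a, ∫ x, (cdFun X p x : ℝ) ∂(mixP P hPmeas z a : Measure X)
      = ∫ x, ∫ x', (cdFun X p x' : ℝ) ∂(P (x, a) : Measure X) ∂(z : Measure X) := fun z a =>
    integral_bind_nonneg (z : Measure X) (fun x => (P (x, a) : Measure X)) (meas_P P hPmeas a)
      _ fm 1 f0 f1
  simp_rw [hI]
  have hc : Continuous (fun q : X × A => ∫ x', (cdFun X p x' : ℝ) ∂(P q : Measure X)) := by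
    rw [continuous_iff_continuousAt]
    intro q
    have := (ProbabilityMeasure.tendsto_iff_forall_integral_tendsto.1 (hPcont.tendsto q))
      (BoundedContinuousFunction.ofNormedAddCommGroup _ fc 1 (fun x => by
        rw [Real.norm_eq_abs, abs_of_nonneg (f0 x)]; exact f1 x))
    exact this
  rw [Metric.tendsto_atTop']
  intro ε hε
  have h := uniform_weak' (I := Unit) zs z hz as a ha
    (fun _ q => ∫ x', (cdFun X p x' : ℝ) ∂(P q : Measure X)) 1
    (fun _ a => measurable_integral_kernel _ (meas_P P hPmeas a) _ fm f0)
    (fun _ q => by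
      have := integral_mem_unit (P q : Measure X) _ fm f0 f1
      rw [abs_of_nonneg this.1]; exact this.2)
    (fun q ε hε => by
      filter_upwards [Metric.continuousAt_iff'.1 hc.continuousAt ε hε] with q' hq' _
      rw [Real.dist_eq] at hq'
      exact hq'.le) (ε / 2) (by positivity)
  obtain ⟨N, hN⟩ := eventually_atTop.1 h
  refine ⟨N, fun n hn => ?_⟩
  rw [Real.dist_eq]
  exact lt_of_le_of_lt (hN n hn.le ()) (by linarith)

lemma Q_nhds (Q : A × X → ProbabilityMeasure Y)
    (hQtv : ∀ (u : ℕ → A × X) (v : A × X), Tendsto u atTop (𝓝 v) →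
      Tendsto (fun n => ⨆ C : {C : Set Y // MeasurableSet C},
        |((Q (u n)) C.1 : ℝ) - ((Q v) C.1 : ℝ)|) atTop (𝓝 0)) (v : A × X) (ε : ℝ) (hε : 0 < ε) :
    ∀ᶠ w in 𝓝 v, ∀ C : {C : Set Y // MeasurableSet C},
      |(Q w : Measure Y).real C.1 - (Q v : Measure Y).real C.1| ≤ ε := by
  have h : Tendsto (fun w => ⨆ C : {C : Set Y // MeasurableSet C},
        |((Q w) C.1 : ℝ) - ((Q v) C.1 : ℝ)|) (𝓝 v) (𝓝 0) :=
    tendsto_of_seq_tendsto fun u hu => hQtv u v hu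
  filter_upwards [h.eventually (gt_mem_nhds hε)] with w hw C
  have hb : BddAbove (Set.range fun C : {C : Set Y // MeasurableSet C} =>
      |((Q w) C.1 : ℝ) - ((Q v) C.1 : ℝ)|) := by
    refine ⟨1, ?_⟩
    rintro _ ⟨C, rfl⟩
    have h1 : ((Q w) C.1 : ℝ) ≤ 1 := by exact_mod_cast (Q w).apply_le_one C.1
    have h2 : ((Q v) C.1 : ℝ) ≤ 1 := by exact_mod_cast (Q v).apply_le_one C.1
    have h3 : 0 ≤ ((Q w) C.1 : ℝ) := NNReal.coe_nonneg _
    have h4 : 0 ≤ ((Q v) C.1 : ℝ) := NNReal.coe_nonneg _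
    simp only
    rw [abs_le]
    constructor <;> linarith
  exact (le_ciSup hb C).trans hw.le

lemma RprimeM_prob (P : X × A → ProbabilityMeasure X) (Q : A × X → ProbabilityMeasure Y)
    (hPmeas : Measurable fun p => (P p : Measure X))
    (hQmeas : Measurable fun p => (Q p : Measure Y)) (z : ProbabilityMeasure X) (a : A) :
    IsProbabilityMeasure (RprimeM P Q z a) := by
  have := isProbabilityMeasure_bind (m := (mixP P hPmeas z a : Measure X))
    (meas_Q Q hQmeas a).aemeasurable
      (Eventually.of_forall fun x => inferInstance)
  exact this

lemma RprimeM_real (P : X × A → ProbabilityMeasure X) (Q : A × X → ProbabilityMeasure Y)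
    (hPmeas : Measurable fun p => (P p : Measure X))
    (hQmeas : Measurable fun p => (Q p : Measure Y)) (z : ProbabilityMeasure X) (a : A)
    (C : Set Y) (hC : MeasurableSet C) :
    (RprimeM P Q z a).real C
      = ∫ x, (Q (a, x) : Measure Y).real C ∂(mixP P hPmeas z a : Measure X) := by
  have h1 : RprimeM P Q z a C = ∫⁻ x, (Q (a, x) : Measure Y) C ∂(mixP P hPmeas z a : Measure X) :=
    Measure.bind_apply hC (meas_Q Q hQmeas a).aemeasurable
  simp only [measureReal_def]
  rw [h1, integral_toReal]
  · exact ((Measure.measurable_coe hC).comp (meas_Q Q hQmeas a)).aemeasurable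
  · exact Eventually.of_forall fun x => measure_lt_top _ _

lemma unif_mix (P : X × A → ProbabilityMeasure X) (Q : A × X → ProbabilityMeasure Y)
    (hPmeas : Measurable fun p => (P p : Measure X))
    (hQmeas : Measurable fun p => (Q p : Measure Y)) (hPcont : Continuous P)
    (hQtv : ∀ (u : ℕ → A × X) (v : A × X), Tendsto u atTop (𝓝 v) →
      Tendsto (fun n => ⨆ C : {C : Set Y // MeasurableSet C},
        |((Q (u n)) C.1 : ℝ) - ((Q v) C.1 : ℝ)|) atTop (𝓝 0))
    (zs : ℕ → ProbabilityMeasure X) (z : ProbabilityMeasure X) (as : ℕ → A) (a : A)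
    (hz : Tendsto zs atTop (𝓝 z)) (ha : Tendsto as atTop (𝓝 a))
    (f : X → ℝ) (hf : Continuous f) (f0 : ∀ x, 0 ≤ f x) (f1 : ∀ x, f x ≤ 1)
    (ε : ℝ) (hε : 0 < ε) :
    ∀ᶠ n in atTop, ∀ C, MeasurableSet C →
      |∫ x, (Q (as n, x) : Measure Y).real C * f x ∂(mixP P hPmeas (zs n) (as n) : Measure X)
        - ∫ x, (Q (a, x) : Measure Y).real C * f x ∂(mixP P hPmeas z a : Measure X)| ≤ ε := by
  have h := uniform_weak' (I := {C : Set Y // MeasurableSet C}) _ _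
    (mixP_tendsto P hPmeas hPcont zs z as a hz ha) as a ha
    (fun C p => (Q (p.2, p.1) : Measure Y).real C.1 * f p.1) 1
    (fun C a => (((Measure.measurable_coe C.2).comp (meas_Q Q hQmeas a)).ennreal_toReal).mul
      hf.measurable)
    (fun C p => by
      rw [abs_mul, abs_of_nonneg measureReal_nonneg, abs_of_nonneg (f0 _)]
      exact mul_le_one₀ measureReal_le_one (f0 _) (f1 _))
    (fun p ε hε => by
      have h1 : Tendsto (fun p : X × A => (p.2, p.1)) (𝓝 p) (𝓝 (p.2, p.1)) :=
        (continuous_swap.tendsto p)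
      have h2 := h1.eventually (Q_nhds Q hQtv (p.2, p.1) (ε / 2) (by positivity))
      have h3 := Metric.continuousAt_iff'.1 ((hf.comp continuous_fst).continuousAt (x := p)) (ε / 2)
        (by positivity)
      filter_upwards [h2, h3] with q hq hq' C
      have hq1 := hq C
      simp only [Function.comp, Real.dist_eq] at hq'
      have e : (Q (q.2, q.1) : Measure Y).real C.1 * f q.1 - (Q (p.2, p.1) : Measure Y).real C.1 * f p.1
        = (Q (q.2, q.1) : Measure Y).real C.1 * (f q.1 - f p.1) +
          ((Q (q.2, q.1) : Measure Y).real C.1 - (Q (p.2, p.1) : Measure Y).real C.1) * f p.1 := by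
        ring
      rw [e]
      refine (abs_add_le _ _).trans ?_
      rw [abs_mul, abs_mul, abs_of_nonneg measureReal_nonneg, abs_of_nonneg (f0 _)]
      have b1 : (Q (q.2, q.1) : Measure Y).real C.1 * |f q.1 - f p.1| ≤ 1 * (ε / 2) :=
        mul_le_mul measureReal_le_one hq'.le (abs_nonneg _) zero_le_one
      have b2 := mul_le_mul hq1 (f1 p.1) (f0 _) (by positivity)
      linarith) ε hε
  filter_upwards [h] with n hn C hC using hn ⟨C, hC⟩

lemma unif_Rprime (P : X × A → ProbabilityMeasure X) (Q : A × X → ProbabilityMeasure Y)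
    (hPmeas : Measurable fun p => (P p : Measure X))
    (hQmeas : Measurable fun p => (Q p : Measure Y)) (hPcont : Continuous P)
    (hQtv : ∀ (u : ℕ → A × X) (v : A × X), Tendsto u atTop (𝓝 v) →
      Tendsto (fun n => ⨆ C : {C : Set Y // MeasurableSet C},
        |((Q (u n)) C.1 : ℝ) - ((Q v) C.1 : ℝ)|) atTop (𝓝 0))
    (zs : ℕ → ProbabilityMeasure X) (z : ProbabilityMeasure X) (as : ℕ → A) (a : A)
    (hz : Tendsto zs atTop (𝓝 z)) (ha : Tendsto as atTop (𝓝 a)) (ε : ℝ) (hε : 0 < ε) :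
    ∀ᶠ n in atTop, ∀ C, MeasurableSet C →
      |(RprimeM P Q (zs n) (as n)).real C - (RprimeM P Q z a).real C| ≤ ε := by
  filter_upwards [unif_mix P Q hPmeas hQmeas hPcont hQtv zs z as a hz ha (fun _ => 1)
    continuous_const (by simp) (by simp) ε hε] with n hn C hC
  rw [RprimeM_real P Q hPmeas hQmeas _ _ C hC, RprimeM_real P Q hPmeas hQmeas _ _ C hC]
  simpa using hn C hC

lemma disint_real (P : X × A → ProbabilityMeasure X) (Q : A × X → ProbabilityMeasure Y)
    (hPmeas : Measurable fun p => (P p : Measure X))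
    (hQmeas : Measurable fun p => (Q p : Measure Y))
    (H : ProbabilityMeasure X × A × Y → ProbabilityMeasure X) (hH : Measurable H)
    (hD : Disint P Q H) (z : ProbabilityMeasure X) (a : A)
    (f : X → ℝ) (hf : Measurable f) (f0 : ∀ x, 0 ≤ f x) (f1 : ∀ x, f x ≤ 1)
    (C : Set Y) (hC : MeasurableSet C) :
    ∫ x, (Q (a, x) : Measure Y).real C * f x ∂(mixP P hPmeas z a : Measure X)
      = ∫ y in C, ∫ x, f x ∂(H (z, a, y) : Measure X) ∂(RprimeM P Q z a) := by
  have hHm : Measurable (fun y => (H (z, a, y) : Measure X)) :=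
    measurable_coe_pm.comp (hH.comp (by fun_prop))
  have hQC : Measurable (fun x => (Q (a, x) : Measure Y) C) :=
    (Measure.measurable_coe hC).comp (meas_Q Q hQmeas a)
  have key : (mixP P hPmeas z a : Measure X).withDensity (fun x => (Q (a, x) : Measure Y) C)
      = ((RprimeM P Q z a).restrict C).bind (fun y => (H (z, a, y) : Measure X)) := by
    ext B hB
    rw [withDensity_apply _ hB, Measure.bind_apply hB hHm.aemeasurable, ← hD z a B C hB hC,
      ← lintegral_indicator hB]
    refine (Measure.lintegral_bind (meas_P P hPmeas a).aemeasurable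
      (hQC.indicator hB).aemeasurable).trans ?_
    unfold Rfun
    refine lintegral_congr fun x => ?_
    rw [lintegral_indicator hB]
  rw [← integral_bind_nonneg ((RprimeM P Q z a).restrict C) _ hHm f hf 1 f0 f1, ← key,
    integral_withDensity_eq_integral_toReal_smul hQC
      (Eventually.of_forall fun x => measure_lt_top _ _)]
  simp [measureReal_def]

lemma L1_conv (P : X × A → ProbabilityMeasure X) (Q : A × X → ProbabilityMeasure Y)
    (hPmeas : Measurable fun p => (P p : Measure X))
    (hQmeas : Measurable fun p => (Q p : Measure Y)) (hPcont : Continuous P)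
    (hQtv : ∀ (u : ℕ → A × X) (v : A × X), Tendsto u atTop (𝓝 v) →
      Tendsto (fun n => ⨆ C : {C : Set Y // MeasurableSet C},
        |((Q (u n)) C.1 : ℝ) - ((Q v) C.1 : ℝ)|) atTop (𝓝 0))
    (H : ProbabilityMeasure X × A × Y → ProbabilityMeasure X) (hH : Measurable H)
    (hD : Disint P Q H)
    (zs : ℕ → ProbabilityMeasure X) (z : ProbabilityMeasure X) (as : ℕ → A) (a : A)
    (hz : Tendsto zs atTop (𝓝 z)) (ha : Tendsto as atTop (𝓝 a))
    (f : X → ℝ) (hf : Continuous f) (f0 : ∀ x, 0 ≤ f x) (f1 : ∀ x, f x ≤ 1)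
    (ε : ℝ) (hε : 0 < ε) :
    ∀ᶠ n in atTop, ∫ y, |∫ x, f x ∂(H (zs n, as n, y) : Measure X)
      - ∫ x, f x ∂(H (z, a, y) : Measure X)| ∂(RprimeM P Q z a) ≤ ε := by
  have hRp := RprimeM_prob P Q hPmeas hQmeas
  filter_upwards [unif_mix P Q hPmeas hQmeas hPcont hQtv zs z as a hz ha f hf f0 f1 (ε / 4)
    (by positivity), unif_Rprime P Q hPmeas hQmeas hPcont hQtv zs z as a hz ha (ε / 4)
    (by positivity)] with n h1 h2
  have hHm : ∀ z a, Measurable (fun y => ∫ x, f x ∂(H (z, a, y) : Measure X)) := fun z a =>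
    measurable_integral_kernel _ (measurable_coe_pm.comp (hH.comp (by fun_prop))) f hf.measurable f0
  have hHb : ∀ p, 0 ≤ ∫ x, f x ∂(H p : Measure X) ∧ ∫ x, f x ∂(H p : Measure X) ≤ 1 := fun p =>
    integral_mem_unit _ f hf.measurable f0 f1
  set u : Y → ℝ := fun y => ∫ x, f x ∂(H (zs n, as n, y) : Measure X) with hu
  set v : Y → ℝ := fun y => ∫ x, f x ∂(H (z, a, y) : Measure X) with hv
  have um : Measurable u := hHm _ _
  have vm : Measurable v := hHm _ _
  have u0 : ∀ y, 0 ≤ u y := fun y => (hHb _).1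
  have u1 : ∀ y, u y ≤ 1 := fun y => (hHb _).2
  have ui : Integrable u (RprimeM P Q z a) := Integrable.of_bound um.aestronglyMeasurable 1
    (Eventually.of_forall fun y => by rw [Real.norm_eq_abs, abs_of_nonneg (u0 y)]; exact u1 y)
  have vi : Integrable v (RprimeM P Q z a) := Integrable.of_bound vm.aestronglyMeasurable 1
    (Eventually.of_forall fun y => by
      rw [Real.norm_eq_abs, abs_of_nonneg (hHb _).1]; exact (hHb _).2)
  have hC : ∀ C, MeasurableSet C →
      |∫ y in C, u y ∂(RprimeM P Q z a) - ∫ y in C, v y ∂(RprimeM P Q z a)| ≤ ε / 2 := by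
    intro C hC
    have a1 := h1 C hC
    rw [disint_real P Q hPmeas hQmeas H hH hD _ _ f hf.measurable f0 f1 C hC,
      disint_real P Q hPmeas hQmeas H hH hD _ _ f hf.measurable f0 f1 C hC] at a1
    have a2 := tv_nonneg_bound _ _ (ε / 4) 1 zero_le_one h2 (C.indicator u) (um.indicator hC)
      (fun y => Set.indicator_nonneg (fun y _ => u0 y) y)
      (fun y => Set.indicator_le' (fun y _ => u1 y) (fun _ _ => zero_le_one) y)
    rw [integral_indicator hC, integral_indicator hC] at a2
    rw [abs_le] at *
    constructor <;> linarith [a1.1, a1.2, a2.1, a2.2]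
  have hS : MeasurableSet {y | v y ≤ u y} := measurableSet_le vm um
  change ∫ y, |(u - v) y| ∂(RprimeM P Q z a) ≤ ε
  rw [← integral_add_compl hS (ui.sub vi).abs]
  have b1 : ∫ y in {y | v y ≤ u y}, |u y - v y| ∂(RprimeM P Q z a)
      = ∫ y in {y | v y ≤ u y}, u y ∂(RprimeM P Q z a)
        - ∫ y in {y | v y ≤ u y}, v y ∂(RprimeM P Q z a) := by
    rw [← integral_sub ui.integrableOn vi.integrableOn]
    refine setIntegral_congr_fun hS fun y (hy : v y ≤ u y) => ?_
    exact abs_of_nonneg (by linarith)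
  have b2 : ∫ y in {y | v y ≤ u y}ᶜ, |u y - v y| ∂(RprimeM P Q z a)
      = ∫ y in {y | v y ≤ u y}ᶜ, v y ∂(RprimeM P Q z a)
        - ∫ y in {y | v y ≤ u y}ᶜ, u y ∂(RprimeM P Q z a) := by
    rw [← integral_sub vi.integrableOn ui.integrableOn]
    refine setIntegral_congr_fun hS.compl fun y (hy : ¬ v y ≤ u y) => ?_
    have := abs_of_nonpos (a := u y - v y) (by linarith)
    simp only [this]; ring
  have c1 := abs_le.1 (hC _ hS)
  have c2 := abs_le.1 (hC _ hS.compl)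
  have e1 : ∫ y in {y | v y ≤ u y}, |(u - v) y| ∂(RprimeM P Q z a) ≤ ε / 2 := by
    exact b1.trans_le c1.2
  have e2 : ∫ y in {y | v y ≤ u y}ᶜ, |(u - v) y| ∂(RprimeM P Q z a) ≤ ε / 2 := by
    refine b2.trans_le ?_
    linarith [c2.1]
  linarith

lemma ae_tendsto_of_summable {Y : Type*} [MeasurableSpace Y] (m : Measure Y) (D : ℕ → Y → ℝ)
    (hD : ∀ j, Integrable (D j) m) (hDm : ∀ j, Measurable (D j)) (k : ℕ)
    (h : ∀ j ≥ k, ∫ y, |D j y| ∂m ≤ (1 / 2 : ℝ) ^ j) :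
    ∀ᵐ y ∂m, Tendsto (fun j => D j y) atTop (𝓝 0) := by
  have h1 : ∀ j, ∫⁻ y, ENNReal.ofReal |D (j + k) y| ∂m ≤ ENNReal.ofReal ((1 / 2 : ℝ) ^ j) := by
    intro j
    rw [← ofReal_integral_eq_lintegral_ofReal (hD (j + k)).abs
      (Eventually.of_forall fun y => abs_nonneg _)]
    refine ENNReal.ofReal_le_ofReal ((h (j + k) (by omega)).trans ?_)
    exact pow_le_pow_of_le_one (by norm_num) (by norm_num) (by omega)
  have hm : ∀ j, Measurable (fun y => ENNReal.ofReal |D (j + k) y|) := fun j =>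
    (measurable_norm.comp (hDm (j + k))).ennreal_ofReal
  have h2 : ∫⁻ y, ∑' j, ENNReal.ofReal |D (j + k) y| ∂m ≠ ∞ := by
    rw [lintegral_tsum fun j => (hm j).aemeasurable]
    refine ne_top_of_le_ne_top ?_ (ENNReal.tsum_le_tsum h1)
    rw [← ENNReal.ofReal_tsum_of_nonneg (fun j => by positivity) summable_geometric_two]
    exact ENNReal.ofReal_ne_top
  filter_upwards [ae_lt_top (Measurable.tsum hm) h2] with y hy
  have h3 := ENNReal.tendsto_atTop_zero_of_tsum_ne_top hy.ne
  have h4 := (ENNReal.tendsto_toReal ENNReal.zero_ne_top).comp h3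
  rw [← tendsto_add_atTop_iff_nat k]
  rw [tendsto_zero_iff_abs_tendsto_zero]
  refine h4.congr fun j => ?_
  simp [ENNReal.toReal_ofReal]

lemma assumptionH_of (P : X × A → ProbabilityMeasure X) (Q : A × X → ProbabilityMeasure Y)
    (hPmeas : Measurable fun p => (P p : Measure X))
    (hQmeas : Measurable fun p => (Q p : Measure Y)) (hPcont : Continuous P)
    (hQtv : ∀ (u : ℕ → A × X) (v : A × X), Tendsto u atTop (𝓝 v) →
      Tendsto (fun n => ⨆ C : {C : Set Y // MeasurableSet C},
        |((Q (u n)) C.1 : ℝ) - ((Q v) C.1 : ℝ)|) atTop (𝓝 0))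
    (H : ProbabilityMeasure X × A × Y → ProbabilityMeasure X) (hH : Measurable H)
    (hD : Disint P Q H) : AssumptionH P Q H := by
  intro zs z as a hz ha
  have hRp := RprimeM_prob P Q hPmeas hQmeas
  have fc : ∀ p, Continuous (fun x => (cdFun X p x : ℝ)) := fun p =>
    NNReal.continuous_coe.comp (cdFun X p).continuous
  have f0 : ∀ p x, 0 ≤ (cdFun X p x : ℝ) := fun p x => NNReal.coe_nonneg _
  have f1 : ∀ p x, (cdFun X p x : ℝ) ≤ 1 := fun p x => by
    exact_mod_cast thickenedIndicator_le_one _ _ x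
  obtain ⟨e, he⟩ := exists_surjective_nat (Finset (TopologicalSpace.countableBasis X) × ℕ)
  have hev : ∀ j, ∀ᶠ n in atTop, ∀ k ∈ Finset.range (j + 1),
      ∫ y, |∫ x, (cdFun X (e k) x : ℝ) ∂(H (zs n, as n, y) : Measure X)
      - ∫ x, (cdFun X (e k) x : ℝ) ∂(H (z, a, y) : Measure X)| ∂(RprimeM P Q z a)
        ≤ (1 / 2 : ℝ) ^ j := fun j =>
    (Finset.eventually_all _).2 fun k _ => L1_conv P Q hPmeas hQmeas hPcont hQtv H hH hD zs z as a
      hz ha _ (fc (e k)) (f0 (e k)) (f1 (e k)) _ (by positivity)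
  obtain ⟨φ, hφ, hφ'⟩ := extraction_forall_of_eventually hev
  refine ⟨φ, hφ, ?_⟩
  have hHm : ∀ p z a, Measurable (fun y => ∫ x, (cdFun X p x : ℝ) ∂(H (z, a, y) : Measure X)) :=
    fun p z a => measurable_integral_kernel _ (measurable_coe_pm.comp (hH.comp (by fun_prop))) _
      (fc p).measurable (f0 p)
  have hHi : ∀ p z a z' a', Integrable (fun y => ∫ x, (cdFun X p x : ℝ) ∂(H (z, a, y) : Measure X))
      (RprimeM P Q z' a') := fun p z a z' a' =>
    Integrable.of_bound (hHm p z a).aestronglyMeasurable 1 (Eventually.of_forall fun y => by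
      have := integral_mem_unit (H (z, a, y) : Measure X) _ (fc p).measurable (f0 p) (f1 p)
      rw [Real.norm_eq_abs, abs_of_nonneg this.1]; exact this.2)
  have hae : ∀ᵐ y ∂(RprimeM P Q z a), ∀ k, Tendsto (fun j =>
      ∫ x, (cdFun X (e k) x : ℝ) ∂(H (zs (φ j), as (φ j), y) : Measure X)
      - ∫ x, (cdFun X (e k) x : ℝ) ∂(H (z, a, y) : Measure X)) atTop (𝓝 0) := by
    rw [ae_all_iff]
    intro k
    exact ae_tendsto_of_summable _ (fun j y =>
      ∫ x, (cdFun X (e k) x : ℝ) ∂(H (zs (φ j), as (φ j), y) : Measure X)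
      - ∫ x, (cdFun X (e k) x : ℝ) ∂(H (z, a, y) : Measure X))
      (fun j => (hHi _ _ _ _ _).sub (hHi _ _ _ _ _)) (fun j => (hHm _ _ _).sub (hHm _ _ _)) k
      (fun j hj => hφ' j k (Finset.mem_range.2 (by omega)))
  obtain ⟨C, hCsub, hCm, hC0⟩ := exists_measurable_superset_of_null hae
  refine ⟨Cᶜ, hCm.compl, ?_, fun y hy => ?_⟩
  · rw [prob_compl_eq_one_iff hCm]; exact hC0
  · have hy' : ∀ k, Tendsto (fun j =>
      ∫ x, (cdFun X (e k) x : ℝ) ∂(H (zs (φ j), as (φ j), y) : Measure X)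
      - ∫ x, (cdFun X (e k) x : ℝ) ∂(H (z, a, y) : Measure X)) atTop (𝓝 0) := by
      by_contra hcon
      exact hy (hCsub hcon)
    refine tendsto_of_cdFun _ _ fun p => ?_
    obtain ⟨k, rfl⟩ := he p
    simpa using (hy' k).add_const (∫ x, (cdFun X (e k) x : ℝ) ∂(H (z, a, y) : Measure X))

lemma qker_tendsto (P : X × A → ProbabilityMeasure X) (Q : A × X → ProbabilityMeasure Y)
    (hPmeas : Measurable fun p => (P p : Measure X))
    (hQmeas : Measurable fun p => (Q p : Measure Y)) (hPcont : Continuous P)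
    (hQtv : ∀ (u : ℕ → A × X) (v : A × X), Tendsto u atTop (𝓝 v) →
      Tendsto (fun n => ⨆ C : {C : Set Y // MeasurableSet C},
        |((Q (u n)) C.1 : ℝ) - ((Q v) C.1 : ℝ)|) atTop (𝓝 0))
    (H : ProbabilityMeasure X × A × Y → ProbabilityMeasure X) (hH : Measurable H)
    (hD : Disint P Q H)
    (zs : ℕ → ProbabilityMeasure X) (z : ProbabilityMeasure X) (as : ℕ → A) (a : A)
    (hz : Tendsto zs atTop (𝓝 z)) (ha : Tendsto as atTop (𝓝 a))
    (f : BoundedContinuousFunction (ProbabilityMeasure X) ℝ) :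
    Tendsto (fun n => ∫ ζ, f ζ ∂(qker P Q H (zs n) (as n))) atTop
            (𝓝 (∫ ζ, f ζ ∂(qker P Q H z a))) := by
  have hRp := RprimeM_prob P Q hPmeas hQmeas
  have hHm : ∀ z a, Measurable (fun y => H (z, a, y)) := fun z a => hH.comp (by fun_prop)
  have fm : Measurable (f : ProbabilityMeasure X → ℝ) := f.continuous.measurable
  have hq : ∀ z a, ∫ ζ, f ζ ∂(qker P Q H z a) = ∫ y, f (H (z, a, y)) ∂(RprimeM P Q z a) :=
    fun z a => integral_map (hHm z a).aemeasurable fm.aestronglyMeasurable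
  simp_rw [hq]
  have hbd : ∀ ζ, |f ζ| ≤ ‖f‖ := fun ζ => f.norm_coe_le_norm ζ
  have hdiff : Tendsto (fun n => ∫ y, f (H (zs n, as n, y)) ∂(RprimeM P Q (zs n) (as n))
      - ∫ y, f (H (zs n, as n, y)) ∂(RprimeM P Q z a)) atTop (𝓝 0) := by
    rw [Metric.tendsto_atTop']
    intro ε hε
    have hpos : 0 < ε / (2 * ‖f‖ + 1) := by positivity
    obtain ⟨N, hN⟩ := eventually_atTop.1
      (unif_Rprime P Q hPmeas hQmeas hPcont hQtv zs z as a hz ha _ hpos)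
    refine ⟨N, fun n hn => ?_⟩
    rw [Real.dist_eq, sub_zero]
    refine lt_of_le_of_lt (tv_bound _ _ _ ‖f‖ (norm_nonneg _) (hN n hn.le)
      (fun y => f (H (zs n, as n, y))) (fm.comp (hHm _ _)) (fun y => hbd _)) ?_
    rw [div_mul_eq_mul_div, div_lt_iff₀ (by positivity)]
    nlinarith [norm_nonneg f]
  have hmain : Tendsto (fun n => ∫ y, f (H (zs n, as n, y)) ∂(RprimeM P Q z a)) atTop
      (𝓝 (∫ y, f (H (z, a, y)) ∂(RprimeM P Q z a))) := by
    refine tendsto_of_subseq_tendsto fun ns hns => ?_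
    obtain ⟨φ, -, C, hCm, hC1, hC⟩ := assumptionH_of P Q hPmeas hQmeas hPcont hQtv H hH hD
      (zs ∘ ns) z (as ∘ ns) a (hz.comp hns) (ha.comp hns)
    refine ⟨φ, ?_⟩
    refine tendsto_integral_of_dominated_convergence (fun _ => ‖f‖)
      (fun n => (fm.comp (hHm _ _)).aestronglyMeasurable) (integrable_const _)
      (fun n => Eventually.of_forall fun y => hbd _) ?_
    have : ∀ᵐ y ∂(RprimeM P Q z a), y ∈ C := (prob_compl_eq_zero_iff hCm).2 hC1
    filter_upwards [this] with y hy
    exact (f.continuous.tendsto _).comp (hC y hy)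
  have := hdiff.add hmain
  simpa using this

end mix

/-- **Theorem (weak continuity of `P` plus total variation continuity of `Q`).**
If `P` is weakly continuous and `Q` is continuous in total variation, then:
(1) the kernel `R'(dy|z,a)` is setwise continuous; (2) every stochastic kernel `H`
satisfying the disintegration identity (3.4) satisfies Assumption (H); and (3) for any
such `H` the transition kernel `q` of the COMDP is weakly continuous. -/
theorem qker_weakly_continuous_of_totalVariation {X Y A : Type*}
    [MetricSpace X] [SecondCountableTopology X] [MeasurableSpace X] [BorelSpace X]
    [MetricSpace Y] [SecondCountableTopology Y] [MeasurableSpace Y] [BorelSpace Y]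
    [MetricSpace A] [SecondCountableTopology A] [MeasurableSpace A] [BorelSpace A]
    (P : X × A → ProbabilityMeasure X) (Q : A × X → ProbabilityMeasure Y)
    (hPmeas : Measurable fun p => (P p : Measure X))
    (hQmeas : Measurable fun p => (Q p : Measure Y))
    (hPcont : Continuous P)
    (hQtv : ∀ (u : ℕ → A × X) (v : A × X), Tendsto u atTop (𝓝 v) →
      Tendsto (fun n => ⨆ C : {C : Set Y // MeasurableSet C},
        |((Q (u n)) C.1 : ℝ) - ((Q v) C.1 : ℝ)|) atTop (𝓝 0)) :
    (∀ (zs : ℕ → ProbabilityMeasure X) (z : ProbabilityMeasure X) (as : ℕ → A) (a : A),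
      Tendsto zs atTop (𝓝 z) → Tendsto as atTop (𝓝 a) →
      ∀ C : Set Y, MeasurableSet C →
        Tendsto (fun n => RprimeM P Q (zs n) (as n) C) atTop (𝓝 (RprimeM P Q z a C))) ∧
    (∀ H : ProbabilityMeasure X × A × Y → ProbabilityMeasure X,
      Measurable H → Disint P Q H → AssumptionH P Q H) ∧
    (∀ H : ProbabilityMeasure X × A × Y → ProbabilityMeasure X,
      Measurable H → Disint P Q H →
      ∀ (zs : ℕ → ProbabilityMeasure X) (z : ProbabilityMeasure X) (as : ℕ → A) (a : A),
        Tendsto zs atTop (𝓝 z) → Tendsto as atTop (𝓝 a) →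
        ∀ f : BoundedContinuousFunction (ProbabilityMeasure X) ℝ,
          Tendsto (fun n => ∫ ζ, f ζ ∂(qker P Q H (zs n) (as n))) atTop
            (𝓝 (∫ ζ, f ζ ∂(qker P Q H z a)))) := by
  refine ⟨?_, fun H hH hD => assumptionH_of P Q hPmeas hQmeas hPcont hQtv H hH hD,
    fun H hH hD zs z as a hz ha f =>
      qker_tendsto P Q hPmeas hQmeas hPcont hQtv H hH hD zs z as a hz ha f⟩
  intro zs z as a hz ha C hC
  have hRp := RprimeM_prob P Q hPmeas hQmeas
  rw [← ENNReal.tendsto_toReal_iff (fun n => measure_ne_top _ _) (measure_ne_top _ _),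
    Metric.tendsto_atTop']
  intro ε hε
  obtain ⟨N, hN⟩ := eventually_atTop.1
    (unif_Rprime P Q hPmeas hQmeas hPcont hQtv zs z as a hz ha (ε / 2) (by positivity))
  refine ⟨N, fun n hn => ?_⟩
  rw [Real.dist_eq]
  exact lt_of_le_of_lt (hN n hn.le C hC) (by linarith)
end
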